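/- Convergence of Stage One to an optimal solution: the pointwise limits α_j = lim_{t→∞} α^t_j and β_i = lim_{t→∞} β^t_i exist; the limit pair satisfies 0 ≤ α_j ≤ p_j for all j, β_i ≥ 0 and Σ_{j∈Γ(i)} g_{ij}(α_j − β_i) ≤ 1 for all i with equality whenever β_i > 0, and Σ_{i∈Γ(j)} s_i·g_{ij}(α_j − β_i) ≤ d_j for all j with equality whenever α_j < p_j; consequently, setting x_{ij} = g_{ij}(α_j − β_i) and u_j = d_j − Σ_{i∈Γ(j)} s_i·x_{ij}, the pair (x,u) is feasible and minimizes F over all feasible pairs. -/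

import Mathlib

open Finset Filter Topology

noncomputable section

variable {I J : Type*} [Fintype I] [Fintype J]

open Classical in
/-- Γ(j): the impressions eligible for contract `j`. -/
def GammaD (adj : I → J → Prop) (j : J) : Finset I :=
  Finset.univ.filter (fun i => adj i j)

open Classical in
/-- Γ(i): the contracts eligible for impression `i`. -/
def GammaS (adj : I → J → Prop) (i : I) : Finset J :=
  Finset.univ.filter (fun j => adj i j)

/-- Total eligible supply `S_j = ∑_{i ∈ Γ(j)} s_i`. -/
def Stot (adj : I → J → Prop) (s : I → ℝ) (j : J) : ℝ :=
  ∑ i ∈ GammaD adj j, s i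

/-- Target `θ_{ij} = d_j / S_j` (independent of `i`). -/
def theta (adj : I → J → Prop) (s : I → ℝ) (d : J → ℝ) (j : J) : ℝ :=
  d j / Stot adj s j

/-- `g_{ij}(z) = max {0, θ_{ij} (1 + z / V_j)}` (independent of `i`). -/
def gfun (adj : I → J → Prop) (s : I → ℝ) (d V : J → ℝ) (j : J) (z : ℝ) : ℝ :=
  max 0 ((theta adj s d j) * (1 + z / V j))

/-- `b` is a valid supply dual `β_i` for demand duals `α`: `b ≥ 0` and either `b = 0` with
`∑_{j ∈ Γ(i)} g_{ij}(α_j) ≤ 1`, or `∑_{j ∈ Γ(i)} g_{ij}(α_j − b) = 1`. -/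
def BetaSpec (adj : I → J → Prop) (s : I → ℝ) (d V : J → ℝ)
    (α : J → ℝ) (i : I) (b : ℝ) : Prop :=
  0 ≤ b ∧ ((b = 0 ∧ ∑ j ∈ GammaS adj i, gfun adj s d V j (α j) ≤ 1) ∨
    ∑ j ∈ GammaS adj i, gfun adj s d V j (α j - b) = 1)

/-- Stage One of SHALE: `α⁰ = 0`; `β^t_i` is a valid supply dual for `α^t`; and
`α^{t+1}_j = min (p_j) a_j` where `a_j` solves `∑_{i ∈ Γ(j)} s_i g_{ij}(a_j − β^t_i) = d_j`. -/
def StageOne (adj : I → J → Prop) (s : I → ℝ) (d p V : J → ℝ)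
    (α : ℕ → J → ℝ) (β : ℕ → I → ℝ) : Prop :=
  (∀ j, α 0 j = 0) ∧
  (∀ t i, BetaSpec adj s d V (α t) i (β t i)) ∧
  (∀ t j, ∃ a : ℝ,
    (∑ i ∈ GammaD adj j, s i * gfun adj s d V j (a - β t i) = d j) ∧
    α (t + 1) j = min (p j) a)

/-- Projected delivery `d_j(α) = ∑_{i ∈ Γ(j)} s_i g_{ij}(α_j − β_i)`. -/
def Dproj (adj : I → J → Prop) (s : I → ℝ) (d V : J → ℝ)
    (α : J → ℝ) (β : I → ℝ) (j : J) : ℝ :=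
  ∑ i ∈ GammaD adj j, s i * gfun adj s d V j (α j - β i)

/-- The objective of the allocation problem. -/
def Fobj (adj : I → J → Prop) (s : I → ℝ) (d p V : J → ℝ)
    (x : I → J → ℝ) (u : J → ℝ) : ℝ :=
  (1 / 2) * ∑ j, ∑ i ∈ GammaD adj j,
      s i * (V j / theta adj s d j) * (x i j - theta adj s d j) ^ 2
    + ∑ j, p j * u j

/-- Feasibility for the allocation problem. -/
def Feasible (adj : I → J → Prop) (s : I → ℝ) (d : J → ℝ)
    (x : I → J → ℝ) (u : J → ℝ) : Prop :=
  (∀ j, d j ≤ ∑ i ∈ GammaD adj j, s i * x i j + u j) ∧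
  (∀ i, ∑ j ∈ GammaS adj i, x i j ≤ 1) ∧
  (∀ i j, adj i j → 0 ≤ x i j) ∧
  (∀ j, 0 ≤ u j)

/-- The KKT conditions for duals `(α, β)`. -/
def KKT (adj : I → J → Prop) (s : I → ℝ) (d p V : J → ℝ)
    (α : J → ℝ) (β : I → ℝ) : Prop :=
  (∀ j, 0 ≤ α j ∧ α j ≤ p j) ∧
  (∀ i, 0 ≤ β i ∧ (∑ j ∈ GammaS adj i, gfun adj s d V j (α j - β i) ≤ 1) ∧
    (0 < β i → ∑ j ∈ GammaS adj i, gfun adj s d V j (α j - β i) = 1)) ∧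
  (∀ j, (∑ i ∈ GammaD adj j, s i * gfun adj s d V j (α j - β i) ≤ d j) ∧
    (α j < p j → ∑ i ∈ GammaD adj j, s i * gfun adj s d V j (α j - β i) = d j))

/-!
For fixed `α` the supply duals, and for fixed `β` the demand duals, are determined by a
complementary slackness condition on a sum that is strictly monotone wherever it is positive, so
each is a monotone function of the other. Starting from `α⁰ = 0`, both sequences therefore
increase; `α` is bounded by `p`, and `β` by `∑ j, (p j + V j)`, since an impression allocates
nothing to contract `j` once `β i` reaches `α j + V j`. The slackness conditions are closed, hence
pass to the limits, where together they are the KKT conditions. Optimality is Lagrangian duality: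
`gfun` minimises the separable Lagrangian over the nonnegative orthant, the Lagrangian is at most
the objective on feasible points, and they agree at a KKT point.
-/

theorem sum_lt_sum_of_lt_of_pos {ι M : Type*} [AddCommMonoid M] [LinearOrder M]
    [IsOrderedCancelAddMonoid M] {K : Finset ι} {f g : ι → M} (hpos : 0 < ∑ k ∈ K, f k)
    (hle : ∀ k ∈ K, f k ≤ g k) (hlt : ∀ k ∈ K, 0 < f k → f k < g k) :
    ∑ k ∈ K, f k < ∑ k ∈ K, g k := by
  obtain ⟨k, hk, hfk⟩ : ∃ k ∈ K, 0 < f k :=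
    exists_lt_of_sum_lt (f := fun _ => 0) (by simpa only [sum_const_zero] using hpos)
  exact sum_lt_sum hle ⟨k, hk, hlt k hk hfk⟩

theorem sq_max_zero_sub_le {R : Type*} [CommRing R] [LinearOrder R] [IsStrictOrderedRing R]
    {m y : R} (hy : 0 ≤ y) : (max 0 m - m) ^ 2 ≤ (y - m) ^ 2 := by
  rcases le_total 0 m with hm | hm
  · rw [max_eq_right hm, sub_self, zero_pow two_ne_zero]
    exact sq_nonneg _
  · rw [max_eq_left hm]
    exact pow_le_pow_left₀ (sub_nonneg.2 hm) (sub_le_sub_right hy m) 2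

section Allocation

variable {I J : Type*} [Fintype I] {adj : I → J → Prop} {s : I → ℝ} {d V : J → ℝ}
  {i : I} {j : J} {z w : ℝ}

theorem mem_GammaD : i ∈ GammaD adj j ↔ adj i j := by
  simp [GammaD]

theorem theta_pos (hd : 0 < d j) (hS : 0 < Stot adj s j) : 0 < theta adj s d j :=
  div_pos hd hS

theorem gfun_nonneg : 0 ≤ gfun adj s d V j z :=
  le_max_left _ _

theorem gfun_zero (hθ : 0 ≤ theta adj s d j) : gfun adj s d V j 0 = theta adj s d j := by
  rw [gfun, zero_div, add_zero, mul_one, max_eq_right hθ]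

theorem gfun_monotone (hθ : 0 ≤ theta adj s d j) (hV : 0 ≤ V j) :
    Monotone (gfun adj s d V j) := by
  intro z w hzw
  unfold gfun
  gcongr

theorem gfun_lt_gfun (hθ : 0 < theta adj s d j) (hV : 0 < V j)
    (hz : 0 < gfun adj s d V j z) (hzw : z < w) : gfun adj s d V j z < gfun adj s d V j w := by
  have hz' : 0 < theta adj s d j * (1 + z / V j) := (lt_max_iff.1 hz).resolve_left (lt_irrefl 0)
  calc gfun adj s d V j z = theta adj s d j * (1 + z / V j) := max_eq_right hz'.le
    _ < theta adj s d j * (1 + w / V j) := by gcongr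
    _ ≤ gfun adj s d V j w := le_max_right _ _

theorem gfun_eq_zero (hθ : 0 ≤ theta adj s d j) (hV : 0 < V j) (hz : z ≤ -V j) :
    gfun adj s d V j z = 0 := by
  have hz' : z / V j ≤ -1 := by rwa [div_le_iff₀ hV, neg_one_mul]
  exact max_eq_left (mul_nonpos_of_nonneg_of_nonpos hθ (by linarith))

@[fun_prop]
theorem continuous_gfun : Continuous (gfun adj s d V j) := by
  unfold gfun
  fun_prop

/-- The quadratic is minimised over all of `ℝ` at `θ (1 + z / V)`, and `gfun` is the projection of
that point onto the half-line. -/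
theorem gfun_isMinOn (hθ : 0 < theta adj s d j) (hV : 0 < V j) :
    IsMinOn (fun x => V j / theta adj s d j / 2 * (x - theta adj s d j) ^ 2 - z * x)
      (Set.Ici 0) (gfun adj s d V j z) := by
  have complete_square (x : ℝ) :
      V j / theta adj s d j / 2 * (x - theta adj s d j) ^ 2 - z * x =
        V j / theta adj s d j / 2 * (x - theta adj s d j * (1 + z / V j)) ^ 2
          - theta adj s d j * z * (1 + z / (2 * V j)) := by
    field
  refine isMinOn_iff.2 fun y hy => ?_
  rw [complete_square, complete_square]
  gcongr ?_ * ?_ - _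
  exact sq_max_zero_sub_le hy

end Allocation

section SupplyDuals

variable {adj : I → J → Prop} {s : I → ℝ} {d V : J → ℝ} {α α' : J → ℝ} {i : I} {b b' : ℝ}

theorem betaSpec_iff :
    BetaSpec adj s d V α i b ↔
      0 ≤ b ∧ ∑ j ∈ GammaS adj i, gfun adj s d V j (α j - b) ≤ 1 ∧
        (0 < b → ∑ j ∈ GammaS adj i, gfun adj s d V j (α j - b) = 1) := by
  constructor
  · rintro ⟨hb, ⟨rfl, hle⟩ | heq⟩
    · simpa only [sub_zero, lt_irrefl, false_imp_iff, le_refl, true_and, and_true] using hle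
    · exact ⟨hb, heq.le, fun _ => heq⟩
  · rintro ⟨hb, hle, heq⟩
    rcases hb.eq_or_lt with rfl | hpos
    · exact ⟨le_rfl, .inl ⟨rfl, by simpa only [sub_zero] using hle⟩⟩
    · exact ⟨hb, .inr (heq hpos)⟩

theorem BetaSpec.mono (hθ : ∀ j, 0 < theta adj s d j) (hV : ∀ j, 0 < V j)
    (h : BetaSpec adj s d V α i b) (h' : BetaSpec adj s d V α' i b') (hα : α ≤ α') : b ≤ b' := by
  rw [betaSpec_iff] at h h'
  obtain ⟨-, -, heq⟩ := h
  obtain ⟨hb', hle', -⟩ := h'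
  by_contra! hlt
  have hfull := heq (hb'.trans_lt hlt)
  have harg (j : J) : α j - b < α' j - b' := by linarith [hα j]
  have hload := sum_lt_sum_of_lt_of_pos (by rw [hfull]; exact one_pos)
    (fun j _ => gfun_monotone (hθ j).le (hV j).le (harg j).le)
    (fun j _ hpos => gfun_lt_gfun (hθ j) (hV j) hpos (harg j))
  linarith

theorem BetaSpec.exists_lt_add (hθ : ∀ j, 0 ≤ theta adj s d j) (hV : ∀ j, 0 < V j)
    (h : BetaSpec adj s d V α i b) (hb : 0 < b) : ∃ j ∈ GammaS adj i, b < α j + V j := by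
  by_contra! hle
  have hfull := (betaSpec_iff.1 h).2.2 hb
  rw [sum_eq_zero fun j hj => gfun_eq_zero (hθ j) (hV j) (by linarith [hle j hj])] at hfull
  exact zero_ne_one hfull

theorem isClosed_setOf_betaSpec :
    IsClosed {q : (J → ℝ) × ℝ | BetaSpec adj s d V q.1 i q.2} := by
  simp only [BetaSpec, Set.ofPred_and, Set.ofPred_or]
  refine (isClosed_le ?_ ?_).inter
    (((isClosed_eq ?_ ?_).inter (isClosed_le ?_ ?_)).union (isClosed_eq ?_ ?_)) <;> fun_prop

end SupplyDuals

/-- The demand-side counterpart of `BetaSpec`: the complementary slackness condition that Stage One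
imposes on the demand dual `α j` for given supply duals `β`. -/
def AlphaSpec (adj : I → J → Prop) (s : I → ℝ) (d p V : J → ℝ)
    (α : J → ℝ) (β : I → ℝ) (j : J) : Prop :=
  α j ≤ p j ∧ Dproj adj s d V α β j ≤ d j ∧ (α j < p j → Dproj adj s d V α β j = d j)

section DemandDuals

variable {I J : Type*} [Fintype I] {adj : I → J → Prop} {s : I → ℝ} {d p V : J → ℝ}
  {α α' : J → ℝ} {β β' : I → ℝ} {j : J}

theorem Dproj_le_Dproj (hs : ∀ i, 0 ≤ s i) (hθ : 0 ≤ theta adj s d j) (hV : 0 ≤ V j)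
    (harg : ∀ i, α j - β i ≤ α' j - β' i) :
    Dproj adj s d V α β j ≤ Dproj adj s d V α' β' j :=
  sum_le_sum fun i _ => mul_le_mul_of_nonneg_left (gfun_monotone hθ hV (harg i)) (hs i)

theorem Dproj_lt_Dproj (hs : ∀ i, 0 ≤ s i) (hθ : 0 < theta adj s d j) (hV : 0 < V j)
    (hpos : 0 < Dproj adj s d V α β j) (harg : ∀ i, α j - β i < α' j - β' i) :
    Dproj adj s d V α β j < Dproj adj s d V α' β' j := by
  refine sum_lt_sum_of_lt_of_pos hpos
    (fun i _ => mul_le_mul_of_nonneg_left (gfun_monotone hθ.le hV.le (harg i).le) (hs i))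
    fun i _ hi => ?_
  have hsi : 0 < s i := pos_of_mul_pos_left hi gfun_nonneg
  have hgi : 0 < gfun adj s d V j (α j - β i) := pos_of_mul_pos_right hi (hs i)
  exact mul_lt_mul_of_pos_left (gfun_lt_gfun hθ hV hgi (harg i)) hsi

theorem Dproj_zero (hd : 0 < d j) (hS : 0 < Stot adj s j) : Dproj adj s d V 0 0 j = d j := by
  simp only [Dproj, Pi.zero_apply, sub_zero, gfun_zero (theta_pos hd hS).le, ← sum_mul]
  exact mul_div_cancel₀ (d j) hS.ne'

theorem alphaSpec_zero (hd : 0 < d j) (hp : 0 ≤ p j) (hS : 0 < Stot adj s j) :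
    AlphaSpec adj s d p V 0 0 j :=
  ⟨hp, (Dproj_zero hd hS).le, fun _ => Dproj_zero hd hS⟩

theorem AlphaSpec.mono (hs : ∀ i, 0 ≤ s i) (hd : 0 < d j) (hθ : 0 < theta adj s d j)
    (hV : 0 < V j) (h : AlphaSpec adj s d p V α β j) (h' : AlphaSpec adj s d p V α' β' j)
    (hβ : β ≤ β') : α j ≤ α' j := by
  obtain ⟨hp, hle, -⟩ := h
  obtain ⟨-, -, heq'⟩ := h'
  by_contra! hlt
  have hfull := heq' (hlt.trans_le hp)
  have harg (i : I) : α' j - β' i < α j - β i := by linarith [hβ i]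
  linarith [Dproj_lt_Dproj hs hθ hV (hd.trans_eq hfull.symm) harg]

theorem alphaSpec_of_eq_min (hs : ∀ i, 0 ≤ s i) (hθ : 0 ≤ theta adj s d j) (hV : 0 ≤ V j)
    {a : ℝ} (ha : Dproj adj s d V (fun _ => a) β j = d j) (hα : α j = min (p j) a) :
    AlphaSpec adj s d p V α β j := by
  refine ⟨hα ▸ min_le_left _ _, ?_, fun hlt => ?_⟩
  · rw [← ha]
    exact Dproj_le_Dproj hs hθ hV fun i => sub_le_sub_right (hα ▸ min_le_right _ _) (β i)
  · have hαa : α j = a := by grind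
    rw [← ha, Dproj, Dproj, hαa]

theorem isClosed_setOf_alphaSpec :
    IsClosed {q : (J → ℝ) × (I → ℝ) | AlphaSpec adj s d p V q.1 q.2 j} := by
  simp only [AlphaSpec, Dproj, imp_iff_not_or, not_lt, Set.ofPred_and, Set.ofPred_or]
  refine (isClosed_le ?_ ?_).inter ((isClosed_le ?_ ?_).inter
    ((isClosed_le ?_ ?_).union (isClosed_eq ?_ ?_))) <;> fun_prop

end DemandDuals

theorem kkt_iff {adj : I → J → Prop} {s : I → ℝ} {d p V : J → ℝ} {α : J → ℝ}
    {β : I → ℝ} :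
    KKT adj s d p V α β ↔
      0 ≤ α ∧ (∀ i, BetaSpec adj s d V α i (β i)) ∧ ∀ j, AlphaSpec adj s d p V α β j := by
  simp only [KKT, betaSpec_iff, AlphaSpec, Dproj, Pi.le_def, Pi.zero_apply]
  grind

section StageOne

variable {adj : I → J → Prop} {s : I → ℝ} {d p V : J → ℝ} {α : ℕ → J → ℝ} {β : ℕ → I → ℝ}

theorem StageOne.alphaSpec_succ (h : StageOne adj s d p V α β) (hs : ∀ i, 0 ≤ s i)
    (hθ : ∀ j, 0 ≤ theta adj s d j) (hV : ∀ j, 0 ≤ V j) (t : ℕ) (j : J) :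
    AlphaSpec adj s d p V (α (t + 1)) (β t) j := by
  obtain ⟨a, ha, hα⟩ := h.2.2 t j
  exact alphaSpec_of_eq_min hs (hθ j) (hV j) ha hα

theorem StageOne.alpha_monotone (h : StageOne adj s d p V α β) (hs : ∀ i, 0 ≤ s i)
    (hd : ∀ j, 0 < d j) (hp : ∀ j, 0 ≤ p j) (hV : ∀ j, 0 < V j)
    (hS : ∀ j, 0 < Stot adj s j) : Monotone α := by
  have hθ (j : J) : 0 < theta adj s d j := theta_pos (hd j) (hS j)
  have hspec := h.alphaSpec_succ hs (fun j => (hθ j).le) fun j => (hV j).le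
  refine monotone_nat_of_le_succ fun t => ?_
  induction t with
  | zero =>
    rw [show α 0 = 0 from funext h.1]
    exact fun j => (alphaSpec_zero (hd j) (hp j) (hS j)).mono hs (hd j) (hθ j) (hV j)
      (hspec 0 j) fun i => (h.2.1 0 i).1
  | succ t ih =>
    exact fun j => (hspec t j).mono hs (hd j) (hθ j) (hV j) (hspec (t + 1) j)
      fun i => (h.2.1 t i).mono hθ hV (h.2.1 (t + 1) i) ih

theorem StageOne.beta_monotone (h : StageOne adj s d p V α β)
    (hθ : ∀ j, 0 < theta adj s d j) (hV : ∀ j, 0 < V j) (hα : Monotone α) : Monotone β :=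
  fun t t' htt' i => (h.2.1 t i).mono hθ hV (h.2.1 t' i) (hα htt')

theorem StageOne.alpha_le (h : StageOne adj s d p V α β) (hp : ∀ j, 0 ≤ p j) (t : ℕ) :
    α t ≤ p := by
  intro j
  cases t with
  | zero => exact (h.1 j).trans_le (hp j)
  | succ t =>
    obtain ⟨a, -, hα⟩ := h.2.2 t j
    exact hα.trans_le (min_le_left _ _)

theorem StageOne.beta_le (h : StageOne adj s d p V α β) (hθ : ∀ j, 0 ≤ theta adj s d j)
    (hp : ∀ j, 0 ≤ p j) (hV : ∀ j, 0 < V j) (t : ℕ) (i : I) : β t i ≤ ∑ j, (p j + V j) := by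
  have hterm (j : J) : 0 ≤ p j + V j := add_nonneg (hp j) (hV j).le
  rcases (h.2.1 t i).1.eq_or_lt with hzero | hpos
  · exact hzero ▸ sum_nonneg fun j _ => hterm j
  · obtain ⟨j, -, hj⟩ := (h.2.1 t i).exists_lt_add hθ hV hpos
    calc β t i ≤ α t j + V j := hj.le
      _ ≤ p j + V j := by gcongr; exact h.alpha_le hp t j
      _ ≤ ∑ j, (p j + V j) :=
        single_le_sum (f := fun j => p j + V j) (fun j _ => hterm j) (mem_univ j)

theorem StageOne.exists_tendsto (h : StageOne adj s d p V α β) (hs : ∀ i, 0 ≤ s i)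
    (hd : ∀ j, 0 < d j) (hp : ∀ j, 0 ≤ p j) (hV : ∀ j, 0 < V j)
    (hS : ∀ j, 0 < Stot adj s j) :
    ∃ (αl : J → ℝ) (βl : I → ℝ), Tendsto α atTop (𝓝 αl) ∧ Tendsto β atTop (𝓝 βl) := by
  have hθ (j : J) : 0 < theta adj s d j := theta_pos (hd j) (hS j)
  have hα : Monotone α := h.alpha_monotone hs hd hp hV hS
  have hαbdd : BddAbove (Set.range α) := ⟨p, Set.forall_mem_range.2 (h.alpha_le hp)⟩
  have hβbdd : BddAbove (Set.range β) :=
    ⟨fun _ => ∑ j, (p j + V j), Set.forall_mem_range.2 (h.beta_le (fun j => (hθ j).le) hp hV)⟩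
  exact ⟨_, _, tendsto_atTop_ciSup hα hαbdd, tendsto_atTop_ciSup (h.beta_monotone hθ hV hα) hβbdd⟩

theorem StageOne.kkt_of_tendsto (h : StageOne adj s d p V α β) (hs : ∀ i, 0 ≤ s i)
    (hd : ∀ j, 0 < d j) (hp : ∀ j, 0 ≤ p j) (hV : ∀ j, 0 < V j)
    (hS : ∀ j, 0 < Stot adj s j) {αl : J → ℝ} {βl : I → ℝ} (hα : Tendsto α atTop (𝓝 αl))
    (hβ : Tendsto β atTop (𝓝 βl)) : KKT adj s d p V αl βl := by
  refine kkt_iff.2 ⟨?_, fun i => ?_, fun j => ?_⟩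
  · rw [← show α 0 = 0 from funext h.1]
    exact (h.alpha_monotone hs hd hp hV hS).ge_of_tendsto hα 0
  · exact isClosed_setOf_betaSpec.mem_of_tendsto (hα.prodMk_nhds (tendsto_pi_nhds.1 hβ i))
      (.of_forall fun t => h.2.1 t i)
  · exact isClosed_setOf_alphaSpec.mem_of_tendsto
      (((tendsto_add_atTop_iff_nat 1).2 hα).prodMk_nhds hβ)
      (.of_forall fun t => h.alphaSpec_succ hs (fun j => (theta_pos (hd j) (hS j)).le)
        (fun j => (hV j).le) t j)

end StageOne

/-- The allocation `x_{ij} = g_{ij}(α_j - β_i)` read off a pair of dual vectors. -/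
def dualAllocation (adj : I → J → Prop) (s : I → ℝ) (d V : J → ℝ)
    (α : J → ℝ) (β : I → ℝ) (i : I) (j : J) : ℝ :=
  gfun adj s d V j (α j - β i)

/-- The demand `u_j = d_j - ∑_{i ∈ Γ(j)} s_i x_{ij}` left unmet by `dualAllocation`. -/
def dualShortfall (adj : I → J → Prop) (s : I → ℝ) (d V : J → ℝ)
    (α : J → ℝ) (β : I → ℝ) (j : J) : ℝ :=
  d j - Dproj adj s d V α β j

/-- The Lagrangian of the allocation problem for the demand and supply constraints, with the
nonnegativity constraints kept explicit. The multiplier of the supply constraint of `i` is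
`s i * β i`, so that `β` is the dual vector of Stage One. -/
def lagrangian (adj : I → J → Prop) (s : I → ℝ) (d p V : J → ℝ)
    (α : J → ℝ) (β : I → ℝ) (x : I → J → ℝ) (u : J → ℝ) : ℝ :=
  Fobj adj s d p V x u
    + ∑ j, α j * (d j - (∑ i ∈ GammaD adj j, s i * x i j + u j))
    + ∑ i, s i * β i * (∑ j ∈ GammaS adj i, x i j - 1)

section Optimality

variable {adj : I → J → Prop} {s : I → ℝ} {d p V : J → ℝ} {α : J → ℝ} {β : I → ℝ}
  {x : I → J → ℝ} {u : J → ℝ}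

theorem KKT.feasible (h : KKT adj s d p V α β) :
    Feasible adj s d (dualAllocation adj s d V α β) (dualShortfall adj s d V α β) :=
  ⟨fun j => (add_sub_cancel (Dproj adj s d V α β j) (d j)).ge, fun i => (h.2.1 i).2.1,
    fun _ _ _ => gfun_nonneg, fun j => sub_nonneg.2 (h.2.2 j).1⟩

theorem KKT.lagrangian_eq_Fobj (h : KKT adj s d p V α β) :
    lagrangian adj s d p V α β (dualAllocation adj s d V α β) (dualShortfall adj s d V α β) =
      Fobj adj s d p V (dualAllocation adj s d V α β) (dualShortfall adj s d V α β) := by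
  have hdemand (j : J) : ∑ i ∈ GammaD adj j, s i * dualAllocation adj s d V α β i j
      + dualShortfall adj s d V α β j = d j :=
    add_sub_cancel (Dproj adj s d V α β j) (d j)
  have hsupply (i : I) :
      s i * β i * (∑ j ∈ GammaS adj i, dualAllocation adj s d V α β i j - 1) = 0 := by
    obtain ⟨hβ, -, heq⟩ := h.2.1 i
    rcases hβ.eq_or_lt with hzero | hpos
    · rw [← hzero, mul_zero, zero_mul]
    · exact mul_eq_zero_of_right _ (sub_eq_zero.2 (heq hpos))
  simp only [lagrangian, hdemand, hsupply, sub_self, mul_zero, sum_const_zero, add_zero]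

theorem Feasible.lagrangian_le_Fobj (h : Feasible adj s d x u) (hs : ∀ i, 0 ≤ s i)
    (hα : ∀ j, 0 ≤ α j) (hβ : ∀ i, 0 ≤ β i) :
    lagrangian adj s d p V α β x u ≤ Fobj adj s d p V x u := by
  have hdemand : ∑ j, α j * (d j - (∑ i ∈ GammaD adj j, s i * x i j + u j)) ≤ 0 :=
    sum_nonpos fun j _ => mul_nonpos_of_nonneg_of_nonpos (hα j) (sub_nonpos.2 (h.1 j))
  have hsupply : ∑ i, s i * β i * (∑ j ∈ GammaS adj i, x i j - 1) ≤ 0 :=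
    sum_nonpos fun i _ =>
      mul_nonpos_of_nonneg_of_nonpos (mul_nonneg (hs i) (hβ i)) (sub_nonpos.2 (h.2.1 i))
  unfold lagrangian
  linarith

theorem sum_GammaD_comm {M : Type*} [AddCommMonoid M] (adj : I → J → Prop) (f : I → J → M) :
    ∑ j, ∑ i ∈ GammaD adj j, f i j = ∑ i, ∑ j ∈ GammaS adj i, f i j :=
  sum_comm' (by simp [mem_GammaD, GammaS])

theorem lagrangian_eq_separable :
    lagrangian adj s d p V α β x u =
      ∑ j, ∑ i ∈ GammaD adj j, s i *
          (V j / theta adj s d j / 2 * (x i j - theta adj s d j) ^ 2 - (α j - β i) * x i j)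
        + ∑ j, (p j - α j) * u j + (∑ j, α j * d j - ∑ i, s i * β i) := by
  have hsupply : ∑ i, s i * β i * (∑ j ∈ GammaS adj i, x i j - 1) =
      ∑ j, ∑ i ∈ GammaD adj j, s i * β i * x i j - ∑ i, s i * β i := by
    simp only [mul_sub, mul_one, sum_sub_distrib, mul_sum, sum_GammaD_comm]
  have hpair (i : I) (j : J) :
      s i * (V j / theta adj s d j / 2 * (x i j - theta adj s d j) ^ 2 - (α j - β i) * x i j) =
        1 / 2 * (s i * (V j / theta adj s d j) * (x i j - theta adj s d j) ^ 2)
          - α j * (s i * x i j) + s i * β i * x i j := by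
    ring
  have hdemand : ∑ j, α j * (d j - (∑ i ∈ GammaD adj j, s i * x i j + u j)) =
      ∑ j, α j * d j - ∑ j, α j * ∑ i ∈ GammaD adj j, s i * x i j - ∑ j, α j * u j := by
    simp only [mul_sub, mul_add, sum_sub_distrib, sum_add_distrib, sub_sub]
  have hshortfall : ∑ j, (p j - α j) * u j = ∑ j, p j * u j - ∑ j, α j * u j := by
    simp only [sub_mul, sum_sub_distrib]
  rw [lagrangian, Fobj, hdemand, hsupply, hshortfall]
  simp only [hpair, sum_add_distrib, sum_sub_distrib, ← mul_sum]
  ring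

theorem KKT.lagrangian_le (h : KKT adj s d p V α β) (hs : ∀ i, 0 ≤ s i)
    (hθ : ∀ j, 0 < theta adj s d j) (hV : ∀ j, 0 < V j)
    (hx : ∀ i j, adj i j → 0 ≤ x i j) (hu : ∀ j, 0 ≤ u j) :
    lagrangian adj s d p V α β (dualAllocation adj s d V α β) (dualShortfall adj s d V α β) ≤
      lagrangian adj s d p V α β x u := by
  obtain ⟨hα, -, hdemand⟩ := h
  have hslack (j : J) : (p j - α j) * dualShortfall adj s d V α β j = 0 := by
    rcases (hα j).2.eq_or_lt with heq | hlt
    · rw [heq, sub_self, zero_mul]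
    · exact mul_eq_zero_of_right _ (sub_eq_zero.2 ((hdemand j).2 hlt).symm)
  rw [lagrangian_eq_separable, lagrangian_eq_separable]
  gcongr ?_ + ?_ + _
  · refine sum_le_sum fun j _ => sum_le_sum fun i hi => mul_le_mul_of_nonneg_left ?_ (hs i)
    exact gfun_isMinOn (hθ j) (hV j) (hx i j (mem_GammaD.1 hi))
  · exact sum_le_sum fun j _ => (hslack j).trans_le (mul_nonneg (sub_nonneg.2 (hα j).2) (hu j))

theorem KKT.optimal (h : KKT adj s d p V α β) (hs : ∀ i, 0 ≤ s i)
    (hθ : ∀ j, 0 < theta adj s d j) (hV : ∀ j, 0 < V j) (hxu : Feasible adj s d x u) :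
    Fobj adj s d p V (dualAllocation adj s d V α β) (dualShortfall adj s d V α β) ≤
      Fobj adj s d p V x u :=
  calc Fobj adj s d p V (dualAllocation adj s d V α β) (dualShortfall adj s d V α β)
    _ = lagrangian adj s d p V α β (dualAllocation adj s d V α β)
          (dualShortfall adj s d V α β) := h.lagrangian_eq_Fobj.symm
    _ ≤ lagrangian adj s d p V α β x u := h.lagrangian_le hs hθ hV hxu.2.2.1 hxu.2.2.2
    _ ≤ Fobj adj s d p V x u :=
      hxu.lagrangian_le_Fobj hs (fun j => (h.1 j).1) fun i => (h.2.1 i).1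

end Optimality

theorem shale_stage_one_converges_to_optimal
    (adj : I → J → Prop) (s : I → ℝ) (d p V : J → ℝ)
    (hs : ∀ i, 0 < s i) (hd : ∀ j, 0 < d j) (hp : ∀ j, 0 < p j) (hV : ∀ j, 0 < V j)
    (hS : ∀ j, 0 < Stot adj s j)
    (α : ℕ → J → ℝ) (β : ℕ → I → ℝ) (hstage : StageOne adj s d p V α β) :
    ∃ (αl : J → ℝ) (βl : I → ℝ),
      (∀ j, Filter.Tendsto (fun t => α t j) Filter.atTop (𝓝 (αl j))) ∧
      (∀ i, Filter.Tendsto (fun t => β t i) Filter.atTop (𝓝 (βl i))) ∧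
      KKT adj s d p V αl βl ∧
      Feasible adj s d (fun i j => gfun adj s d V j (αl j - βl i))
        (fun j => d j - ∑ i ∈ GammaD adj j, s i * gfun adj s d V j (αl j - βl i)) ∧
      ∀ y v, Feasible adj s d y v →
        Fobj adj s d p V (fun i j => gfun adj s d V j (αl j - βl i))
          (fun j => d j - ∑ i ∈ GammaD adj j, s i * gfun adj s d V j (αl j - βl i))
          ≤ Fobj adj s d p V y v := by
  have hs' (i : I) : 0 ≤ s i := (hs i).le
  have hp' (j : J) : 0 ≤ p j := (hp j).le
  have hθ (j : J) : 0 < theta adj s d j := theta_pos (hd j) (hS j)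
  obtain ⟨αl, βl, hα, hβ⟩ := hstage.exists_tendsto hs' hd hp' hV hS
  have hkkt : KKT adj s d p V αl βl := hstage.kkt_of_tendsto hs' hd hp' hV hS hα hβ
  exact ⟨αl, βl, tendsto_pi_nhds.1 hα, tendsto_pi_nhds.1 hβ, hkkt, hkkt.feasible,
    fun y v hyv => hkkt.optimal hs' hθ hV hyv⟩

end
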